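/- arXiv:2011.11837 — 3 statements merged into one kernel-verified Lean document; each statement's English description precedes it below -/
import Mathlib

section
/- Let n ≥ 1 be an integer, let E be an (n+1)×(n+1) real Hurwitz matrix, and let N₀ > 0 and M > 0 be constants. Suppose that for each ε ∈ (0,1) there is a continuously differentiable function η_ε : [0,∞) → ℝ^{n+1} satisfying η_ε'(t) = ε⁻¹ E η_ε(t) + d_ε(t) for all t ≥ 0, where d_ε : [0,∞) → ℝ^{n+1} satisfies ‖d_ε(t)‖ ≤ N₀ for all t ≥ 0, and suppose ‖η_ε(0)‖ ≤ M ε^{−n}. Then for every σ > 0 and every T₀ > 0 there exists ε* ∈ (0,1) such that for all ε ∈ (0, ε*) and all t ≥ T₀, ‖η_ε(t)‖ ≤ σ. (This is the scaled-error form of the state-estimation conclusion (10) of Theorem 1: the scaled observer error dynamics is a fast Hurwitz linear system perturbed by a bounded disturbance, and the error becomes smaller than any prescribed σ after any prescribed time T₀ for all sufficiently small ε.) -/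
open scoped RealInnerProductSpace

/-- A real square matrix is Hurwitz if every eigenvalue of the matrix, regarded as a
complex matrix, has negative real part. -/
def Matrix.IsHurwitz {n : Type*} [Fintype n] [DecidableEq n]
    (E : Matrix n n ℝ) : Prop :=
  ∀ μ ∈ spectrum ℂ (E.map (algebraMap ℝ ℂ)), μ.re < 0

/-
The exponential of a Hurwitz matrix decays by a shift: if the spectrum of `a` lies in the open left
half-plane, it lies in the disc of some radius `s` centred at `-s`, so Gelfand's formula bounds
`‖(s + a) ^ k‖` by `C * r ^ k` with `r < s`, and `exp (t a) = exp (-s t) exp (t (s + a))` has norm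
at most `C * exp (-(s - r) t)`. Comparing `u ↦ exp ((t - u) A) x(u)` with an explicit scalar
boundary then gives the variation-of-constants estimate for `x' = A x + d` without integrating `d`.
For `ε⁻¹ A` the decay rate is `α / ε`: the disturbance contributes `O(ε)`, and the factor
`exp (-α T₀ / ε)` beats the `ε ^ (-n)` size of the initial value.
-/

open Filter NormedSpace Set
open scoped NNReal Topology

lemma exists_norm_add_lt_of_isCompact_of_re_neg {K : Set ℂ} (hK : IsCompact K)
    (hre : ∀ z ∈ K, z.re < 0) : ∃ s : ℝ≥0, ∀ z ∈ K, ‖(s : ℂ) + z‖ < s := by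
  have hcont : ContinuousOn (fun z : ℂ => ‖z‖ ^ 2 / (-2 * z.re)) K := by
    refine ContinuousOn.div (by fun_prop) (by fun_prop) fun z hz => ?_
    linarith [hre z hz]
  obtain ⟨B, hB⟩ := hK.bddAbove_image hcont
  refine ⟨(B + 1).toNNReal, fun z hz => ?_⟩
  have hre := hre z hz
  have hle : ‖z‖ ^ 2 / (-2 * z.re) ≤ B := hB ⟨z, hz, rfl⟩
  have hsq : ‖z‖ ^ 2 < (B + 1) * (-2 * z.re) := by
    rw [div_le_iff₀ (by linarith)] at hle
    linarith
  have hB1 : 0 < B + 1 := pos_of_mul_pos_left ((sq_nonneg _).trans_lt hsq) (by linarith)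
  rw [Real.coe_toNNReal _ hB1.le]
  refine lt_of_pow_lt_pow_left₀ 2 hB1.le ?_
  rw [Complex.sq_norm, Complex.normSq_apply] at hsq ⊢
  simp only [Complex.add_re, Complex.add_im, Complex.ofReal_re, Complex.ofReal_im]
  linarith

section GrowthBounds

variable {A : Type*} [NormedRing A]

lemma exists_norm_pow_le_of_spectralRadius_lt [NormedAlgebra ℂ A] [CompleteSpace A] {a : A}
    {s : ℝ≥0} (ha : spectralRadius ℂ a < s) :
    ∃ C : ℝ, ∃ r < s, ∀ k : ℕ, ‖a ^ k‖ ≤ C * (r : ℝ) ^ k := by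
  obtain ⟨r, har, hrs⟩ := ENNReal.lt_iff_exists_nnreal_btwn.1 ha
  have hr : 0 < (r : ℝ) := NNReal.coe_pos.2 (ENNReal.coe_pos.1 (bot_le.trans_lt har))
  have hroot : ∀ᶠ k : ℕ in atTop, (‖a ^ k‖₊ : ENNReal) ^ (1 / k : ℝ) ≤ r :=
    (spectrum.pow_nnnorm_pow_one_div_tendsto_nhds_spectralRadius a).eventually_le_const har
  have hbigO : (fun k : ℕ => a ^ k) =O[atTop] fun k => (r : ℝ) ^ k := by
    refine .of_bound 1 ?_
    filter_upwards [hroot, eventually_ne_atTop 0] with k hk hk0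
    rw [one_div, ENNReal.rpow_inv_le_iff (by positivity), ENNReal.rpow_natCast] at hk
    have hpow : ‖a ^ k‖ ≤ (r : ℝ) ^ k := by exact_mod_cast hk
    simpa using hpow
  obtain ⟨C, -, hC⟩ := Asymptotics.bound_of_isBigO_nat_atTop hbigO
  refine ⟨C, r, by exact_mod_cast hrs, fun k => ?_⟩
  simpa using hC (pow_pos hr k).ne'

variable [NormedAlgebra ℝ A] [CompleteSpace A]

lemma norm_exp_smul_le_of_norm_pow_le {a : A} {C r : ℝ}
    (ha : ∀ k : ℕ, ‖a ^ k‖ ≤ C * r ^ k) {t : ℝ} (ht : 0 ≤ t) :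
    ‖exp (t • a)‖ ≤ C * Real.exp (r * t) := by
  have hscalar : HasSum (fun k : ℕ => C * ((k.factorial : ℝ)⁻¹ * (r * t) ^ k))
      (C * Real.exp (r * t)) := by
    rw [Real.exp_eq_exp_ℝ]
    exact (exp_series_hasSum_exp' (𝕂 := ℝ) (r * t)).mul_left C
  refine (exp_series_hasSum_exp' (𝕂 := ℝ) (t • a)).norm_le_of_bounded hscalar fun k => ?_
  calc ‖(k.factorial : ℝ)⁻¹ • (t • a) ^ k‖
      = (k.factorial : ℝ)⁻¹ * (t ^ k * ‖a ^ k‖) := by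
        simp only [smul_pow, norm_smul, norm_inv, norm_pow, Real.norm_natCast,
          Real.norm_of_nonneg ht]
    _ ≤ (k.factorial : ℝ)⁻¹ * (t ^ k * (C * r ^ k)) := by gcongr; exact ha k
    _ = C * ((k.factorial : ℝ)⁻¹ * (r * t) ^ k) := by ring

lemma exp_smul_eq_exp_neg_smul_exp_smul_add (a : A) (s t : ℝ) :
    exp (t • a) = Real.exp (-(s * t)) • exp (t • (algebraMap ℝ A s + a)) := by
  let _ : NormedAlgebra ℚ A := .restrictScalars ℚ ℝ A
  have hsplit : t • a = algebraMap ℝ A (-(s * t)) + t • (algebraMap ℝ A s + a) := by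
    simp only [Algebra.algebraMap_eq_smul_one]
    module
  rw [hsplit, exp_add_of_commute (Algebra.commutes _ _), ← algebraMap_exp_comm,
    ← Real.exp_eq_exp_ℝ, ← Algebra.smul_def]

end GrowthBounds

/-- Exponential stability of an element `a` of a real Banach algebra: the one-parameter semigroup
`t ↦ exp (t • a)` generated by `a` decays exponentially. -/
def IsExponentiallyStable {A : Type*} [NormedRing A] [NormedAlgebra ℝ A] (a : A) : Prop :=
  ∃ C α : ℝ, 0 < α ∧ ∀ t, 0 ≤ t → ‖exp (t • a)‖ ≤ C * Real.exp (-(α * t))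

lemma isExponentiallyStable_of_forall_mem_spectrum_re_neg {A : Type*} [NormedRing A]
    [NormedAlgebra ℂ A] [CompleteSpace A] {a : A} (ha : ∀ z ∈ spectrum ℂ a, z.re < 0) :
    IsExponentiallyStable a := by
  rcases subsingleton_or_nontrivial A with _ | _
  · exact ⟨0, 1, one_pos, fun t _ => by simp [Subsingleton.elim (exp (t • a)) 0]⟩
  obtain ⟨s, hs⟩ := exists_norm_add_lt_of_isCompact_of_re_neg (spectrum.isCompact a) ha
  have hradius : spectralRadius ℂ (algebraMap ℝ A s + a) < s := by
    refine spectrum.spectralRadius_lt_of_forall_lt _ fun z hz => ?_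
    have hshift : z - s ∈ spectrum ℂ a := by
      rw [← spectrum.add_mem_add_iff (s := (s : ℂ)), sub_add_cancel]
      exact hz
    simpa [← NNReal.coe_lt_coe] using hs _ hshift
  obtain ⟨C, r, hrs, hpow⟩ := exists_norm_pow_le_of_spectralRadius_lt hradius
  refine ⟨C, s - r, sub_pos.2 hrs, fun t ht => ?_⟩
  calc ‖exp (t • a)‖ = Real.exp (-(s * t)) * ‖exp (t • (algebraMap ℝ A s + a))‖ := by
        rw [exp_smul_eq_exp_neg_smul_exp_smul_add a s t, norm_smul,
          Real.norm_of_nonneg (Real.exp_nonneg _)]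
    _ ≤ Real.exp (-(s * t)) * (C * Real.exp (r * t)) := by
        gcongr
        exact norm_exp_smul_le_of_norm_pow_le hpow ht
    _ = C * Real.exp (-((s - r) * t)) := by
        rw [mul_left_comm, ← Real.exp_add]
        ring_nf

lemma IsExponentiallyStable.of_algHom_injective {A B : Type*} [NormedRing A] [NormedAlgebra ℝ A]
    [FiniteDimensional ℝ A] [NormedRing B] [NormedAlgebra ℝ B] {f : A →ₐ[ℝ] B}
    (hf : Function.Injective f) {a : A} (ha : IsExponentiallyStable (f a)) :
    IsExponentiallyStable a := by
  let _ : NormedAlgebra ℚ A := .restrictScalars ℚ ℝ A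
  let _ : NormedAlgebra ℚ B := .restrictScalars ℚ ℝ B
  have _ : CompleteSpace A := FiniteDimensional.complete ℝ A
  obtain ⟨K, -, hK⟩ := f.toLinearMap.exists_antilipschitzWith (LinearMap.ker_eq_bot.2 hf)
  have hcont : Continuous f := f.toLinearMap.continuous_of_finiteDimensional
  obtain ⟨C, α, hα, hC⟩ := ha
  refine ⟨K * C, α, hα, fun t ht => ?_⟩
  calc ‖exp (t • a)‖ ≤ K * ‖f (exp (t • a))‖ := by
        exact ZeroHomClass.bound_of_antilipschitz f.toLinearMap hK _
    _ = K * ‖exp (t • f a)‖ := by rw [map_exp f hcont, map_smul]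
    _ ≤ K * C * Real.exp (-(α * t)) := by
        rw [mul_assoc]
        gcongr
        exact hC t ht

section EuclideanOperators

variable {ι : Type*} [Fintype ι] [DecidableEq ι]

/-- Extension of scalars from `ℝ` to `ℂ` for operators on Euclidean space, as the algebra
homomorphism that regards the matrix of a real operator as a complex matrix. -/
noncomputable def euclideanComplexification :
    (EuclideanSpace ℝ ι →L[ℝ] EuclideanSpace ℝ ι) →ₐ[ℝ]
      EuclideanSpace ℂ ι →L[ℂ] EuclideanSpace ℂ ι :=
  (AlgHomClass.toAlgHom (Matrix.toEuclideanCLM (n := ι) (𝕜 := ℂ))).restrictScalars ℝ |>.comp <|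
    (Algebra.ofId ℝ ℂ).mapMatrix.comp <|
      AlgHomClass.toAlgHom (Matrix.toEuclideanCLM (n := ι) (𝕜 := ℝ)).symm

lemma euclideanComplexification_toEuclideanCLM (E : Matrix ι ι ℝ) :
    euclideanComplexification (Matrix.toEuclideanCLM (n := ι) (𝕜 := ℝ) E) =
      Matrix.toEuclideanCLM (n := ι) (𝕜 := ℂ) (E.map (algebraMap ℝ ℂ)) :=
  congrArg (fun F : Matrix ι ι ℝ => Matrix.toEuclideanCLM (n := ι) (𝕜 := ℂ)
    (F.map (algebraMap ℝ ℂ))) (Matrix.toEuclideanCLM.symm_apply_apply E)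

lemma euclideanComplexification_injective :
    Function.Injective (euclideanComplexification (ι := ι)) :=
  (Matrix.toEuclideanCLM (n := ι) (𝕜 := ℂ)).injective.comp <|
    (Matrix.map_injective Complex.ofReal_injective).comp
      (Matrix.toEuclideanCLM (n := ι) (𝕜 := ℝ)).symm.injective

lemma isExponentiallyStable_toEuclideanCLM_of_isHurwitz {E : Matrix ι ι ℝ} (hE : E.IsHurwitz) :
    IsExponentiallyStable (Matrix.toEuclideanCLM (n := ι) (𝕜 := ℝ) E) := by
  refine .of_algHom_injective euclideanComplexification_injective ?_
  rw [euclideanComplexification_toEuclideanCLM]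
  refine isExponentiallyStable_of_forall_mem_spectrum_re_neg fun z hz => hE z ?_
  rwa [AlgEquiv.spectrum_eq] at hz

end EuclideanOperators

lemma tendsto_zpow_neg_mul_exp_neg_div_nhdsGT_zero (n : ℕ) {b : ℝ} (hb : 0 < b) :
    Tendsto (fun ε : ℝ => ε ^ (-(n : ℤ)) * Real.exp (-(b / ε))) (𝓝[>] 0) (𝓝 0) := by
  refine ((tendsto_rpow_mul_exp_neg_mul_atTop_nhds_zero n b hb).comp
    tendsto_inv_nhdsGT_zero).congr fun ε => ?_
  simp [div_eq_mul_inv]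

section Perturbation

variable {V : Type*} [NormedAddCommGroup V] [NormedSpace ℝ V] [CompleteSpace V]

lemma hasDerivWithinAt_exp_sub_smul_apply {A : V →L[ℝ] V} {x : ℝ → V} {v : V} {S : Set ℝ} {s : ℝ}
    (t : ℝ) (hx : HasDerivWithinAt x (A (x s) + v) S s) :
    HasDerivWithinAt (fun u => exp ((t - u) • A) (x u)) (exp ((t - s) • A) v) S s := by
  have hexp : HasDerivAt (fun u => exp ((t - u) • A)) (-(exp ((t - s) • A) * A)) s := by
    simpa using! (hasDerivAt_exp_smul_const A (t - s)).scomp s ((hasDerivAt_id s).const_sub t)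
  refine (hexp.hasDerivWithinAt.clm_apply hx).congr_deriv ?_
  simp

lemma norm_le_of_hasDerivWithinAt_apply_add {A : V →L[ℝ] V} {C α D : ℝ} (hα : 0 < α)
    (hA : ∀ t, 0 ≤ t → ‖exp (t • A)‖ ≤ C * Real.exp (-(α * t))) {x d : ℝ → V}
    (hx : ∀ t, 0 ≤ t → HasDerivWithinAt x (A (x t) + d t) (Ici 0) t)
    (hd : ∀ t, 0 ≤ t → ‖d t‖ ≤ D) {t : ℝ} (ht : 0 ≤ t) :
    ‖x t‖ ≤ C * Real.exp (-(α * t)) * ‖x 0‖ + C * D / α := by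
  let bound : ℝ → ℝ := fun s => C * Real.exp (-(α * t)) * ‖x 0‖ +
    C * D / α * (Real.exp (-(α * (t - s))) - Real.exp (-(α * t)))
  have hbound : ∀ s, HasDerivAt bound (C * Real.exp (-(α * (t - s))) * D) s := fun s => by
    have hexponent : HasDerivAt (fun s => -(α * (t - s))) α s := by
      simpa using! (((hasDerivAt_id s).const_sub t).const_mul α).neg
    refine (((hexponent.exp.sub_const _).const_mul _).const_add _).congr_deriv ?_
    field_simp
  have hfinal : ‖x t‖ ≤ bound t := by
    have hle := image_norm_le_of_norm_deriv_right_le_deriv_boundary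
      (f := fun s => exp ((t - s) • A) (x s)) (f' := fun s => exp ((t - s) • A) (d s))
      (B := bound)
      (fun s hs => (hasDerivWithinAt_exp_sub_smul_apply t (hx s hs.1)).continuousWithinAt.mono
        Icc_subset_Ici_self)
      (fun s hs => (hasDerivWithinAt_exp_sub_smul_apply t (hx s hs.1)).mono
        (Ici_subset_Ici.2 hs.1))
      (by simpa [bound] using (exp (t • A)).le_of_opNorm_le (hA t ht) (x 0)) hbound
      (fun s hs => ContinuousLinearMap.le_of_opNorm_le_of_le _
        (hA _ (sub_nonneg.2 hs.2.le)) (hd s hs.1))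
    simpa using hle (right_mem_Icc.2 ht)
  have hC : 0 ≤ C := by simpa using (norm_nonneg _).trans (hA 0 le_rfl)
  have hD : 0 ≤ D := (norm_nonneg _).trans (hd 0 le_rfl)
  calc ‖x t‖ ≤ bound t := hfinal
    _ = C * Real.exp (-(α * t)) * ‖x 0‖ + C * D / α * (1 - Real.exp (-(α * t))) := by
      simp [bound]
    _ ≤ C * Real.exp (-(α * t)) * ‖x 0‖ + C * D / α := by
      gcongr
      exact mul_le_of_le_one_right (by positivity) (sub_le_self _ (Real.exp_nonneg _))

lemma norm_le_of_hasDerivWithinAt_inv_smul_apply_add {A : V →L[ℝ] V} {C α D ε : ℝ} (hα : 0 < α)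
    (hε : 0 < ε) (hA : ∀ t, 0 ≤ t → ‖exp (t • A)‖ ≤ C * Real.exp (-(α * t))) {x d : ℝ → V}
    (hx : ∀ t, 0 ≤ t → HasDerivWithinAt x (ε⁻¹ • A (x t) + d t) (Ici 0) t)
    (hd : ∀ t, 0 ≤ t → ‖d t‖ ≤ D) {t : ℝ} (ht : 0 ≤ t) :
    ‖x t‖ ≤ C * Real.exp (-(α * t / ε)) * ‖x 0‖ + C * D / α * ε := by
  have hscaled : ∀ s, 0 ≤ s → ‖exp (s • ε⁻¹ • A)‖ ≤ C * Real.exp (-(α / ε * s)) := fun s hs => by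
    convert hA (s * ε⁻¹) (by positivity) using 3
    · rw [smul_smul]
    · field_simp
  convert norm_le_of_hasDerivWithinAt_apply_add (div_pos hα hε) hscaled hx hd ht using 2
  · ring_nf
  · field_simp

theorem stmt0_general {A : V →L[ℝ] V} (hA : IsExponentiallyStable A) (n : ℕ) {N₀ M : ℝ}
    {η d : ℝ → ℝ → V}
    (hode : ∀ ε ∈ Ioo (0 : ℝ) 1, ∀ t, 0 ≤ t →
      HasDerivWithinAt (η ε) (ε⁻¹ • A (η ε t) + d ε t) (Ici 0) t)
    (hd : ∀ ε ∈ Ioo (0 : ℝ) 1, ∀ t, 0 ≤ t → ‖d ε t‖ ≤ N₀)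
    (hη0 : ∀ ε ∈ Ioo (0 : ℝ) 1, ‖η ε 0‖ ≤ M * ε ^ (-(n : ℤ)))
    (σ : ℝ) (hσ : 0 < σ) (T₀ : ℝ) (hT₀ : 0 < T₀) :
    ∃ εstar ∈ Ioo (0 : ℝ) 1, ∀ ε, 0 < ε → ε < εstar → ∀ t, T₀ ≤ t → ‖η ε t‖ ≤ σ := by
  obtain ⟨C, α, hα, hC⟩ := hA
  have hC0 : 0 ≤ C := by simpa using (norm_nonneg _).trans (hC 0 le_rfl)
  have hlim : Tendsto (fun ε : ℝ =>
      C * M * (ε ^ (-(n : ℤ)) * Real.exp (-(α * T₀ / ε))) + C * N₀ / α * ε) (𝓝[>] 0) (𝓝 0) := by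
    have hε : Tendsto (fun ε : ℝ => ε) (𝓝[>] 0) (𝓝 0) := tendsto_id.mono_left nhdsWithin_le_nhds
    simpa using ((tendsto_zpow_neg_mul_exp_neg_div_nhdsGT_zero n (mul_pos hα hT₀)).const_mul
      (C * M)).add (hε.const_mul (C * N₀ / α))
  obtain ⟨εstar, ⟨hpos, hle⟩, hsmall⟩ := (mem_nhdsGT_iff_exists_mem_Ioc_Ioo_subset
    (one_half_pos (α := ℝ))).1 (hlim.eventually_le_const hσ)
  refine ⟨εstar, ⟨hpos, hle.trans_lt one_half_lt_one⟩, fun ε hε hεstar t ht => ?_⟩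
  have hmem : ε ∈ Ioo (0 : ℝ) 1 := ⟨hε, hεstar.trans (hle.trans_lt one_half_lt_one)⟩
  calc ‖η ε t‖
      ≤ C * Real.exp (-(α * t / ε)) * ‖η ε 0‖ + C * N₀ / α * ε :=
        norm_le_of_hasDerivWithinAt_inv_smul_apply_add hα hε hC (hode ε hmem) (hd ε hmem)
          (hT₀.le.trans ht)
    _ ≤ C * Real.exp (-(α * T₀ / ε)) * (M * ε ^ (-(n : ℤ))) + C * N₀ / α * ε := by
        gcongr
        exact hη0 ε hmem
    _ = C * M * (ε ^ (-(n : ℤ)) * Real.exp (-(α * T₀ / ε))) + C * N₀ / α * ε := by ring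
    _ ≤ σ := hsmall ⟨hε, hεstar⟩

end Perturbation

/-- Scaled-error form of the state-estimation conclusion (10) of Theorem 1:
the scaled observer error dynamics is a fast Hurwitz linear system perturbed by a
bounded disturbance, and the error becomes smaller than any prescribed `σ` after any
prescribed time `T₀` for all sufficiently small `ε`. -/
theorem stmt0 (n : ℕ) (hn : 1 ≤ n)
    (E : Matrix (Fin (n + 1)) (Fin (n + 1)) ℝ) (hE : E.IsHurwitz)
    (N₀ M : ℝ) (hN₀ : 0 < N₀) (hM : 0 < M)
    (η d : ℝ → ℝ → EuclideanSpace ℝ (Fin (n + 1)))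
    (hsmooth : ∀ ε : ℝ, ε ∈ Set.Ioo (0 : ℝ) 1 →
      ContDiffOn ℝ 1 (η ε) (Set.Ici (0 : ℝ)))
    (hode : ∀ ε : ℝ, ε ∈ Set.Ioo (0 : ℝ) 1 → ∀ t : ℝ, 0 ≤ t →
      HasDerivWithinAt (η ε)
        (ε⁻¹ • (Matrix.toEuclideanLin E (η ε t)) + d ε t) (Set.Ici (0 : ℝ)) t)
    (hd : ∀ ε : ℝ, ε ∈ Set.Ioo (0 : ℝ) 1 → ∀ t : ℝ, 0 ≤ t → ‖d ε t‖ ≤ N₀)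
    (hη0 : ∀ ε : ℝ, ε ∈ Set.Ioo (0 : ℝ) 1 → ‖η ε 0‖ ≤ M * ε ^ (-(n : ℤ))) :
    ∀ σ : ℝ, 0 < σ → ∀ T₀ : ℝ, 0 < T₀ →
      ∃ εstar : ℝ, εstar ∈ Set.Ioo (0 : ℝ) 1 ∧
        ∀ ε : ℝ, 0 < ε → ε < εstar → ∀ t : ℝ, T₀ ≤ t → ‖η ε t‖ ≤ σ :=
  have hA := isExponentiallyStable_toEuclideanCLM_of_isHurwitz hE
  stmt0_general hA n hode hd hη0
end

section
/- Let E be an (n+1)×(n+1) real matrix and P a real symmetric positive definite (n+1)×(n+1) matrix with P E + Eᵀ P = −I; set α₁ = λ_min(P) and α₂ = λ_max(P). Let ε > 0 and N₀ > 0, and let η : [0,∞) → ℝ^{n+1} be differentiable with η'(t) = ε⁻¹ E η(t) + d(t) and ‖d(t)‖ ≤ N₀ for all t. Then for all t ≥ 0: ‖η(t)‖ ≤ √(α₂/α₁) ‖η(0)‖ e^{−t/(2α₂ε)} + 2 α₂² N₀ ε / α₁. (This is the explicit bound (16) in the proof of Theorem 1.) -/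
open scoped RealInnerProductSpace

/-!
The argument measures `η` in the energy norm `√⟪P η, η⟫`. Differentiating `V = ⟪P η, η⟫` along the
equation, the Lyapunov inequality contributes `-‖η‖² / ε ≤ -V / (α₂ ε)`, and the Cauchy–Schwarz
inequality for the form of `P` bounds the contribution of `d` by `2 √α₂ N₀ √V`. So `√V` formally
satisfies the linear inequality `(√V)' ≤ -√V / (2 α₂ ε) + √α₂ N₀`, to which Grönwall's inequality
applies with a negative rate; the eigenvalue bounds translate the result back to `‖η‖`.
-/

section Gronwall

open Filter Set Topology

variable {V V' : ℝ → ℝ} {δ K c a b : ℝ}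

lemma div_two_mul_sqrt_add_sq_le {v v' μ : ℝ} (hc : 0 ≤ c) (hμ : 0 < μ) (hv : 0 ≤ v)
    (hv' : v' ≤ 2 * (K * v + c * √v)) :
    v' / (2 * √(v + μ ^ 2)) ≤ K * √(v + μ ^ 2) + (c + |K| * μ) := by
  have hpos : 0 < v + μ ^ 2 := add_pos_of_nonneg_of_pos hv (pow_pos hμ 2)
  have hvw : √v ≤ √(v + μ ^ 2) := Real.sqrt_le_sqrt (le_add_of_nonneg_right (sq_nonneg μ))
  have hμw : μ ≤ √(v + μ ^ 2) := Real.le_sqrt_of_sq_le (le_add_of_nonneg_left hv)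
  have hw_sq : √(v + μ ^ 2) ^ 2 = v + μ ^ 2 := Real.sq_sqrt hpos.le
  have hw_pos : 0 < √(v + μ ^ 2) := Real.sqrt_pos.2 hpos
  generalize √(v + μ ^ 2) = w at hvw hμw hw_sq hw_pos ⊢
  have hKμ : -(K * μ ^ 2) ≤ |K| * μ * w := calc
    -(K * μ ^ 2) = -K * μ * μ := by ring
    _ ≤ |K| * μ * w := by gcongr; exact neg_le_abs K
  have hcw : c * √v ≤ c * w := by gcongr
  rw [div_le_iff₀ (mul_pos two_pos hw_pos)]
  calc v' ≤ 2 * (K * v + c * √v) := hv'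
    _ ≤ 2 * (K * w ^ 2 + |K| * μ * w + c * w) := by rw [hw_sq]; linarith
    _ = (K * w + (c + |K| * μ)) * (2 * w) := by ring

/- `√V` may fail to be differentiable where `V` vanishes, whereas `√(V + μ²)` never does; the price
is the extra forcing term `|K| * μ`, which disappears as `μ → 0`. -/
lemma sqrt_add_sq_le_gronwallBound_of_deriv_right_le (hc : 0 ≤ c)
    (hV : ContinuousOn V (Icc a b)) (hV₀ : ∀ t ∈ Icc a b, 0 ≤ V t)
    (hV' : ∀ t ∈ Ico a b, HasDerivWithinAt V (V' t) (Ici t) t) (ha : √(V a) ≤ δ)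
    (bound : ∀ t ∈ Ico a b, V' t ≤ 2 * (K * V t + c * √(V t))) {μ : ℝ} (hμ : 0 < μ) :
    ∀ t ∈ Icc a b, √(V t + μ ^ 2) ≤ gronwallBound (δ + μ) K (c + |K| * μ) (t - a) := by
  have hδ : 0 ≤ δ := (Real.sqrt_nonneg _).trans ha
  have hinit : √(V a + μ ^ 2) ≤ δ + μ := by
    have hVa : V a ≤ δ ^ 2 := (Real.sqrt_le_left hδ).1 ha
    refine Real.sqrt_le_iff.2 ⟨by positivity, ?_⟩
    linarith [mul_nonneg hδ hμ.le, add_sq δ μ]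
  have hderiv : ∀ t ∈ Ico a b, HasDerivWithinAt (fun t ↦ √(V t + μ ^ 2))
      (V' t / (2 * √(V t + μ ^ 2))) (Ici t) t := fun t ht ↦
    ((hV' t ht).add_const _).sqrt
      (add_pos_of_nonneg_of_pos (hV₀ t (Ico_subset_Icc_self ht)) (pow_pos hμ 2)).ne'
  exact le_gronwallBound_of_liminf_deriv_right_le (hV.add continuousOn_const).sqrt
    (fun t ht _ hr ↦ (hderiv t ht).liminf_right_slope_le hr) hinit fun t ht ↦
      div_two_mul_sqrt_add_sq_le hc hμ (hV₀ t (Ico_subset_Icc_self ht)) (bound t ht)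

lemma sqrt_le_gronwallBound_of_deriv_right_le (hc : 0 ≤ c)
    (hV : ContinuousOn V (Icc a b)) (hV₀ : ∀ t ∈ Icc a b, 0 ≤ V t)
    (hV' : ∀ t ∈ Ico a b, HasDerivWithinAt V (V' t) (Ici t) t) (ha : √(V a) ≤ δ)
    (bound : ∀ t ∈ Ico a b, V' t ≤ 2 * (K * V t + c * √(V t))) :
    ∀ t ∈ Icc a b, √(V t) ≤ gronwallBound δ K c (t - a) := by
  intro t ht
  have hcont : Continuous fun μ ↦ gronwallBound (δ + μ) K (c + |K| * μ) (t - a) := by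
    unfold gronwallBound
    split_ifs <;> fun_prop
  have hlim : Tendsto (fun μ ↦ gronwallBound (δ + μ) K (c + |K| * μ) (t - a)) (𝓝[>] 0)
      (𝓝 (gronwallBound δ K c (t - a))) := by
    simpa using (hcont.tendsto 0).mono_left nhdsWithin_le_nhds
  refine ge_of_tendsto hlim (eventually_mem_nhdsWithin.mono fun μ hμ ↦ ?_)
  calc √(V t) ≤ √(V t + μ ^ 2) := Real.sqrt_le_sqrt (le_add_of_nonneg_right (sq_nonneg μ))
    _ ≤ gronwallBound (δ + μ) K (c + |K| * μ) (t - a) :=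
      sqrt_add_sq_le_gronwallBound_of_deriv_right_le hc hV hV₀ hV' ha bound hμ t ht

end Gronwall

section Energy

variable {H : Type*} [NormedAddCommGroup H] [InnerProductSpace ℝ H] {P : H →L[ℝ] H}

lemma real_inner_le_sqrt_mul_sqrt_of_isPositive (hP : P.IsPositive) (x y : H) :
    ⟪P x, y⟫ ≤ √⟪P x, x⟫ * √⟪P y, y⟫ := by
  have hsymm : (innerₗ H ∘ₗ (P : H →ₗ[ℝ] H)).IsSymm :=
    ⟨fun x y ↦ (hP.isSymmetric x y).trans (real_inner_comm _ _)⟩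
  rw [← Real.sqrt_mul (hP.inner_nonneg_left x)]
  exact Real.le_sqrt_of_sq_le
    (LinearMap.BilinForm.apply_sq_le_of_symm _ hP.inner_nonneg_left hsymm x y)

lemma hasDerivWithinAt_inner_apply_self (hP : (P : H →ₗ[ℝ] H).IsSymmetric) {η : ℝ → H} {η' : H}
    {s : Set ℝ} {t : ℝ} (hη : HasDerivWithinAt η η' s t) :
    HasDerivWithinAt (fun t ↦ ⟪P (η t), η t⟫) (2 * ⟪P (η t), η'⟫) s t := by
  have hPη : HasDerivWithinAt (fun t ↦ P (η t)) (P η') s t :=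
    P.hasFDerivAt.comp_hasDerivWithinAt t hη
  have hcomm : ⟪P η', η t⟫ = ⟪P (η t), η'⟫ := (hP η' (η t)).trans (real_inner_comm _ _)
  refine (hPη.inner ℝ hη).congr_deriv ?_
  rw [hcomm, two_mul]

lemma inner_lyapunov_apply_self [CompleteSpace H] (hP : (P : H →ₗ[ℝ] H).IsSymmetric)
    (E : H →L[ℝ] H) (x : H) : ⟪(P * E + star E * P) x, x⟫ = 2 * ⟪P x, E x⟫ := by
  have hPE : ⟪P (E x), x⟫ = ⟪P x, E x⟫ := (hP (E x) x).trans (real_inner_comm _ _)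
  have hEP : ⟪(star E) (P x), x⟫ = ⟪P x, E x⟫ := E.adjoint_inner_left x (P x)
  rw [add_apply, inner_add_left, two_mul]
  exact congrArg₂ (· + ·) hPE hEP

lemma inner_perturbed_le_of_lyapunov (hP : P.IsPositive) {E : H → H}
    (hE : ∀ x, 2 * ⟪P x, E x⟫ ≤ -‖x‖ ^ 2) {α ε N : ℝ} (hα : 0 < α)
    (hPα : ∀ x, ⟪P x, x⟫ ≤ α * ‖x‖ ^ 2) (hε : 0 < ε) (x : H) {v : H} (hv : ‖v‖ ≤ N) :
    ⟪P x, ε⁻¹ • E x + v⟫ ≤ -1 / (2 * α * ε) * ⟪P x, x⟫ + √α * N * √⟪P x, x⟫ := by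
  have hdecay : ⟪P x, E x⟫ ≤ -⟪P x, x⟫ / (2 * α) := by
    rw [le_div_iff₀ (by positivity)]
    nlinarith [hE x, hPα x]
  have hforce : ⟪P x, v⟫ ≤ √α * N * √⟪P x, x⟫ := calc
    ⟪P x, v⟫ ≤ √⟪P x, x⟫ * √⟪P v, v⟫ := real_inner_le_sqrt_mul_sqrt_of_isPositive hP x v
    _ ≤ √⟪P x, x⟫ * √(α * N ^ 2) := by gcongr; exact (hPα v).trans (by gcongr)
    _ = √α * N * √⟪P x, x⟫ := by
      rw [Real.sqrt_mul hα.le, Real.sqrt_sq ((norm_nonneg v).trans hv), mul_comm]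
  calc ⟪P x, ε⁻¹ • E x + v⟫ = ε⁻¹ * ⟪P x, E x⟫ + ⟪P x, v⟫ := by
        rw [inner_add_right, real_inner_smul_right]
    _ ≤ ε⁻¹ * (-⟪P x, x⟫ / (2 * α)) + √α * N * √⟪P x, x⟫ := by gcongr
    _ = -1 / (2 * α * ε) * ⟪P x, x⟫ + √α * N * √⟪P x, x⟫ := by field_simp

lemma sqrt_inner_le_gronwallBound_of_lyapunov (hP : P.IsPositive) {E : H → H}
    (hE : ∀ x, 2 * ⟪P x, E x⟫ ≤ -‖x‖ ^ 2) {α ε N : ℝ} (hα : 0 < α)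
    (hPα : ∀ x, ⟪P x, x⟫ ≤ α * ‖x‖ ^ 2) (hε : 0 < ε) {η d : ℝ → H}
    (hη : ∀ t, 0 ≤ t → HasDerivWithinAt η (ε⁻¹ • E (η t) + d t) (Set.Ici 0) t)
    (hd : ∀ t, 0 ≤ t → ‖d t‖ ≤ N) {t : ℝ} (ht : 0 ≤ t) :
    √⟪P (η t), η t⟫ ≤ gronwallBound (√α * ‖η 0‖) (-1 / (2 * α * ε)) (√α * N) t := by
  have hN : 0 ≤ N := (norm_nonneg _).trans (hd 0 le_rfl)
  have hV (s : ℝ) (hs : 0 ≤ s) := hasDerivWithinAt_inner_apply_self hP.isSymmetric (hη s hs)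
  have hinit : √⟪P (η 0), η 0⟫ ≤ √α * ‖η 0‖ := by
    rw [← Real.sqrt_sq (norm_nonneg (η 0)), ← Real.sqrt_mul hα.le]
    exact Real.sqrt_le_sqrt (hPα _)
  simpa only [sub_zero] using sqrt_le_gronwallBound_of_deriv_right_le (by positivity)
    (fun s hs ↦ (hV s hs.1).continuousWithinAt.mono Set.Icc_subset_Ici_self)
    (fun s _ ↦ hP.inner_nonneg_left (η s))
    (fun s hs ↦ (hV s hs.1).mono (Set.Ici_subset_Ici.2 hs.1)) hinit
    (fun s hs ↦ by
      gcongr; exact inner_perturbed_le_of_lyapunov hP hE hα hPα hε (η s) (hd s hs.1))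
    t (Set.right_mem_Icc.2 ht)

theorem stmt5_general (hP : (P : H →ₗ[ℝ] H).IsSymmetric) {E : H → H}
    (hE : ∀ x, 2 * ⟪P x, E x⟫ ≤ -‖x‖ ^ 2) {α₁ α₂ ε N₀ : ℝ} (hα₁ : 0 < α₁) (hα₂ : 0 < α₂)
    (hPα₁ : ∀ x, α₁ * ‖x‖ ^ 2 ≤ ⟪P x, x⟫) (hPα₂ : ∀ x, ⟪P x, x⟫ ≤ α₂ * ‖x‖ ^ 2)
    (hε : 0 < ε) {η d : ℝ → H}
    (hη : ∀ t, 0 ≤ t → HasDerivWithinAt η (ε⁻¹ • E (η t) + d t) (Set.Ici 0) t)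
    (hd : ∀ t, 0 ≤ t → ‖d t‖ ≤ N₀) {t : ℝ} (ht : 0 ≤ t) :
    ‖η t‖ ≤ √(α₂ / α₁) * (‖η 0‖ * Real.exp (-t / (2 * α₂ * ε))
      + 2 * α₂ * N₀ * ε * (1 - Real.exp (-t / (2 * α₂ * ε)))) := by
  have hpos : P.IsPositive :=
    P.isPositive_iff.2 ⟨hP, fun x ↦ (by positivity : 0 ≤ α₁ * ‖x‖ ^ 2).trans (hPα₁ x)⟩
  have hlower : √α₁ * ‖η t‖ ≤ √⟪P (η t), η t⟫ := by
    rw [← Real.sqrt_sq (norm_nonneg (η t)), ← Real.sqrt_mul hα₁.le]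
    exact Real.sqrt_le_sqrt (hPα₁ _)
  have hrate_ne : -1 / (2 * α₂ * ε) ≠ 0 := div_ne_zero (by norm_num) (by positivity)
  have hrate : -1 / (2 * α₂ * ε) * t = -t / (2 * α₂ * ε) := by ring
  rw [Real.sqrt_div hα₂.le, div_mul_eq_mul_div, le_div_iff₀' (Real.sqrt_pos.2 hα₁)]
  calc √α₁ * ‖η t‖
      ≤ gronwallBound (√α₂ * ‖η 0‖) (-1 / (2 * α₂ * ε)) (√α₂ * N₀) t :=
        hlower.trans (sqrt_inner_le_gronwallBound_of_lyapunov hpos hE hα₂ hPα₂ hε hη hd ht)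
    _ = √α₂ * (‖η 0‖ * Real.exp (-t / (2 * α₂ * ε))
          + 2 * α₂ * N₀ * ε * (1 - Real.exp (-t / (2 * α₂ * ε)))) := by
        simp only [gronwallBound_of_K_ne_0 hrate_ne, hrate]
        field_simp
        ring

end Energy

section Matrix

open Matrix
open scoped MatrixOrder

variable {m : Type*} [Fintype m] [DecidableEq m] {P : Matrix m m ℝ} {α : ℝ}

lemma inner_toEuclideanCLM_le_of_le {A B : Matrix m m ℝ} (h : A ≤ B) (x : EuclideanSpace ℝ m) :
    ⟪toEuclideanCLM (𝕜 := ℝ) A x, x⟫ ≤ ⟪toEuclideanCLM (𝕜 := ℝ) B x, x⟫ := by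
  have hpos : 0 ≤ ⟪toEuclideanCLM (𝕜 := ℝ) (B - A) x, x⟫ :=
    (isPositive_toEuclideanLin_iff.2 (le_iff.1 h)).inner_nonneg_left x
  rwa [map_sub, _root_.sub_apply, inner_sub_left, sub_nonneg] at hpos

lemma inner_toEuclideanCLM_algebraMap (α : ℝ) (x : EuclideanSpace ℝ m) :
    ⟪toEuclideanCLM (𝕜 := ℝ) (algebraMap ℝ (Matrix m m ℝ) α) x, x⟫ = α * ‖x‖ ^ 2 := by
  rw [AlgHomClass.commutes, ContinuousLinearMap.algebraMap_apply, real_inner_smul_left,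
    real_inner_self_eq_norm_sq]

lemma mul_norm_sq_le_inner_toEuclideanCLM (hP : P.IsHermitian)
    (hα : α ∈ lowerBounds (Set.range hP.eigenvalues)) (x : EuclideanSpace ℝ m) :
    α * ‖x‖ ^ 2 ≤ ⟪toEuclideanCLM (𝕜 := ℝ) P x, x⟫ := by
  rw [← hP.spectrum_real_eq_range_eigenvalues] at hα
  rw [← inner_toEuclideanCLM_algebraMap]
  exact inner_toEuclideanCLM_le_of_le
    ((algebraMap_le_iff_le_spectrum hP.isSelfAdjoint).2 fun _ hr ↦ hα hr) x

lemma inner_toEuclideanCLM_le_mul_norm_sq (hP : P.IsHermitian)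
    (hα : α ∈ upperBounds (Set.range hP.eigenvalues)) (x : EuclideanSpace ℝ m) :
    ⟪toEuclideanCLM (𝕜 := ℝ) P x, x⟫ ≤ α * ‖x‖ ^ 2 := by
  rw [← hP.spectrum_real_eq_range_eigenvalues] at hα
  rw [← inner_toEuclideanCLM_algebraMap]
  exact inner_toEuclideanCLM_le_of_le
    ((le_algebraMap_iff_spectrum_le hP.isSelfAdjoint).2 fun _ hr ↦ hα hr) x

lemma two_mul_inner_toEuclideanCLM_of_lyapunov (hP : P.IsHermitian) {E : Matrix m m ℝ}
    (hLyap : P * E + Eᵀ * P = -1) (x : EuclideanSpace ℝ m) :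
    2 * ⟪toEuclideanCLM (𝕜 := ℝ) P x, toEuclideanCLM (𝕜 := ℝ) E x⟫ = -‖x‖ ^ 2 := by
  have hop := congrArg (toEuclideanCLM (n := m) (𝕜 := ℝ)) hLyap
  rw [← conjTranspose_eq_transpose_of_trivial, ← star_eq_conjTranspose, map_add, map_mul, map_mul,
    map_star, map_neg, map_one] at hop
  rw [← inner_lyapunov_apply_self (isSymmetric_toEuclideanLin_iff.2 hP), hop, _root_.neg_apply,
    one_apply_eq_self, inner_neg_left, real_inner_self_eq_norm_sq]

end Matrix

lemma sqrt_div_mul_add_mul_one_sub_le {α₁ α₂ a q c : ℝ} (hα₁ : 0 < α₁) (hα : α₁ ≤ α₂) (hq : 0 ≤ q)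
    (hc : 0 ≤ c) :
    √(α₂ / α₁) * (a * q + c * (1 - q)) ≤ √(α₂ / α₁) * a * q + α₂ / α₁ * c := by
  have hsqrt : √(α₂ / α₁) ≤ α₂ / α₁ := Real.sqrt_le_self_iff.2 (.inr ((one_le_div hα₁).2 hα))
  calc √(α₂ / α₁) * (a * q + c * (1 - q))
      = √(α₂ / α₁) * a * q + √(α₂ / α₁) * (c * (1 - q)) := by ring
    _ ≤ √(α₂ / α₁) * a * q + √(α₂ / α₁) * c := by
      gcongr
      exact mul_le_of_le_one_right hc (sub_le_self 1 hq)
    _ ≤ √(α₂ / α₁) * a * q + α₂ / α₁ * c := by gcongr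

/-- The explicit bound (16) in the proof of Theorem 1: if `P` is a symmetric positive
definite solution of `P E + Eᵀ P = −I` with minimal eigenvalue `α₁` and maximal
eigenvalue `α₂`, and `η` solves `η' = ε⁻¹ E η + d` with `‖d(t)‖ ≤ N₀`, then
`‖η(t)‖ ≤ √(α₂/α₁) ‖η(0)‖ e^{−t/(2α₂ε)} + 2 α₂² N₀ ε / α₁` for all `t ≥ 0`. -/
theorem stmt5 (n : ℕ) (E P : Matrix (Fin (n + 1)) (Fin (n + 1)) ℝ)
    (hPsymm : P.IsSymm) (hPpd : P.PosDef) (hP : P.IsHermitian)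
    (hLyap : P * E + E.transpose * P = -(1 : Matrix (Fin (n + 1)) (Fin (n + 1)) ℝ))
    (α₁ α₂ : ℝ)
    (hα₁ : IsLeast {r : ℝ | ∃ i, hP.eigenvalues i = r} α₁)
    (hα₂ : IsGreatest {r : ℝ | ∃ i, hP.eigenvalues i = r} α₂)
    (ε N₀ : ℝ) (hε : 0 < ε) (hN₀ : 0 < N₀)
    (η d : ℝ → EuclideanSpace ℝ (Fin (n + 1)))
    (hη : ∀ t : ℝ, 0 ≤ t →
      HasDerivWithinAt η (ε⁻¹ • (Matrix.toEuclideanLin E (η t)) + d t)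
        (Set.Ici (0 : ℝ)) t)
    (hd : ∀ t : ℝ, 0 ≤ t → ‖d t‖ ≤ N₀) :
    ∀ t : ℝ, 0 ≤ t →
      ‖η t‖ ≤ Real.sqrt (α₂ / α₁) * ‖η 0‖ * Real.exp (-t / (2 * α₂ * ε))
        + 2 * α₂ ^ 2 * N₀ * ε / α₁ := by
  intro t ht
  have hα₁_pos : 0 < α₁ := by
    obtain ⟨i, hi⟩ := hα₁.1
    exact hi ▸ hPpd.eigenvalues_pos i
  have hα : α₁ ≤ α₂ := hα₂.2 hα₁.1
  have hα₂_pos : 0 < α₂ := hα₁_pos.trans_le hα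
  calc ‖η t‖
      ≤ √(α₂ / α₁) * (‖η 0‖ * Real.exp (-t / (2 * α₂ * ε))
          + 2 * α₂ * N₀ * ε * (1 - Real.exp (-t / (2 * α₂ * ε)))) :=
        stmt5_general (Matrix.isSymmetric_toEuclideanLin_iff.2 hP)
          (fun x ↦ (two_mul_inner_toEuclideanCLM_of_lyapunov hP hLyap x).le) hα₁_pos hα₂_pos
          (mul_norm_sq_le_inner_toEuclideanCLM hP hα₁.2)
          (inner_toEuclideanCLM_le_mul_norm_sq hP hα₂.2) hε hη hd ht
    _ ≤ √(α₂ / α₁) * ‖η 0‖ * Real.exp (-t / (2 * α₂ * ε)) + α₂ / α₁ * (2 * α₂ * N₀ * ε) :=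
        sqrt_div_mul_add_mul_one_sub_le hα₁_pos hα (Real.exp_nonneg _) (by positivity)
    _ = √(α₂ / α₁) * ‖η 0‖ * Real.exp (-t / (2 * α₂ * ε)) + 2 * α₂ ^ 2 * N₀ * ε / α₁ := by
        ring
end

section
/- Let Γ be an m×m real symmetric positive definite matrix with smallest eigenvalue γ₁ > 0 and largest eigenvalue γ₂, let v : [0,∞) → ℝᵐ be continuous, let v₁, …, v_p ∈ ℝᵐ be fixed vectors such that Ψ = Σ_{j=1}^{p} vⱼvⱼᵀ has λ_min(Ψ) = λ > 0, and let W̃ : [0,∞) → ℝᵐ be continuously differentiable with W̃'(t) = −Γ ( v(t)v(t)ᵀ + Ψ ) W̃(t) for all t ≥ 0. Then for all t ≥ 0: ‖W̃(t)‖ ≤ √(γ₂/γ₁) ‖W̃(0)‖ e^{−λ γ₁ t}. In particular W̃(t) → 0 exponentially. -/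
/-!
The Lyapunov function is `V(x) = ⟪Γ⁻¹ x, x⟫`. Along the flow `Γ` cancels `Γ⁻¹`, so
`V' = -2 ⟪(v vᵀ + Ψ) W, W⟫ ≤ -2 λ ‖W‖² ≤ -2 λ γ₁ V`, because `v vᵀ ≥ 0`, `Ψ ≥ λ` and `Γ⁻¹ ≤ γ₁⁻¹`.
Grönwall's inequality gives `V(W(t)) ≤ V(W(0)) e^{-2λγ₁t}`, and `γ₂⁻¹ ≤ Γ⁻¹ ≤ γ₁⁻¹` converts this
into the bound on the norm.
-/

section InnerProductSpace

open Set
open scoped RealInnerProductSpace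

variable {E : Type*} [NormedAddCommGroup E] [InnerProductSpace ℝ E]

lemma mul_inner_le_norm_sq_of_mul_norm_sq_le_inner {x y : E} {c : ℝ} (hc : 0 ≤ c)
    (h : c * ‖x‖ ^ 2 ≤ ⟪y, x⟫) : c * ⟪y, x⟫ ≤ ‖y‖ ^ 2 := by
  have expand : ‖y - c • x‖ ^ 2 = ‖y‖ ^ 2 - 2 * c * ⟪y, x⟫ + c * (c * ‖x‖ ^ 2) := by
    rw [norm_sub_sq_real, inner_smul_right, norm_smul, Real.norm_eq_abs, mul_pow, sq_abs]
    ring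
  linarith [sq_nonneg ‖y - c • x‖, mul_le_mul_of_nonneg_left h hc]

lemma inner_map_sq_le_inner_map_self_mul {T : E →ₗ[ℝ] E} (hT : T.IsPositive) (x y : E) :
    ⟪T x, y⟫ ^ 2 ≤ ⟪T x, x⟫ * ⟪T y, y⟫ :=
  LinearMap.BilinForm.apply_sq_le_of_symm ((innerₗ E).comp T) hT.inner_nonneg_left
    ⟨fun x y ↦ (hT.isSymmetric x y).trans (real_inner_comm _ _)⟩ x y

lemma norm_map_sq_le_mul_inner {T : E →ₗ[ℝ] E} (hT : T.IsPositive) {c : ℝ}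
    (hc : ∀ x, ⟪T x, x⟫ ≤ c * ‖x‖ ^ 2) (x : E) : ‖T x‖ ^ 2 ≤ c * ⟪T x, x⟫ := by
  obtain hx | hx := eq_or_ne (T x) 0
  · simp [hx]
  refine le_of_mul_le_mul_right ?_ (pow_pos (norm_pos_iff.2 hx) 2)
  calc ‖T x‖ ^ 2 * ‖T x‖ ^ 2
      = ⟪T x, T x⟫ ^ 2 := by rw [real_inner_self_eq_norm_sq, sq (‖T x‖ ^ 2)]
    _ ≤ ⟪T x, x⟫ * ⟪T (T x), T x⟫ := inner_map_sq_le_inner_map_self_mul hT x (T x)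
    _ ≤ ⟪T x, x⟫ * (c * ‖T x‖ ^ 2) :=
        mul_le_mul_of_nonneg_left (hc (T x)) (hT.inner_nonneg_left x)
    _ = c * ⟪T x, x⟫ * ‖T x‖ ^ 2 := by ring

lemma exists_continuousLinearEquiv_of_coercive [CompleteSpace E] {T : E →ₗ[ℝ] E}
    (hT : T.IsSymmetric) {c : ℝ} (hc : 0 < c) (h : ∀ x, c * ‖x‖ ^ 2 ≤ ⟪T x, x⟫) :
    ∃ e : E ≃L[ℝ] E, (e : E →ₗ[ℝ] E) = T := by
  have hunit : IsUnit (⟨T, hT.continuous⟩ : E →L[ℝ] E) := by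
    refine ContinuousLinearMap.isUnit_of_forall_le_norm_inner_map _ (c := ⟨c, hc.le⟩) hc fun x ↦ ?_
    exact (mul_comm _ _).trans_le ((h x).trans (le_abs_self _))
  obtain ⟨u, hu⟩ := hunit
  exact ⟨.ofUnit u, congrArg ContinuousLinearMap.toLinearMap hu⟩

lemma le_mul_exp_of_hasDerivWithinAt_le {f f' : ℝ → ℝ} {k a : ℝ}
    (hf : ∀ t, a ≤ t → HasDerivWithinAt f (f' t) (Ici a) t)
    (hle : ∀ t, a ≤ t → f' t ≤ k * f t) {t : ℝ} (ht : a ≤ t) :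
    f t ≤ f a * Real.exp (k * (t - a)) := by
  rw [← gronwallBound_ε0]
  refine le_gronwallBound_of_liminf_deriv_right_le
    (fun s hs ↦ (hf s hs.1).continuousWithinAt.mono Icc_subset_Ici_self) (fun s hs r hr ↦ ?_)
    le_rfl (fun s hs ↦ (hle s hs.1).trans_eq (add_zero _).symm) t ⟨ht, le_rfl⟩
  exact ((hf s hs.1).mono (Ici_subset_Ici.2 hs.1)).liminf_right_slope_le hr

lemma inner_map_self_le_mul_exp {P : E →L[ℝ] E} (hP : (P : E →ₗ[ℝ] E).IsSymmetric)
    {w w' : ℝ → E} {k a : ℝ} (hw : ∀ t, a ≤ t → HasDerivWithinAt w (w' t) (Ici a) t)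
    (hle : ∀ t, a ≤ t → 2 * ⟪P (w t), w' t⟫ ≤ k * ⟪P (w t), w t⟫) {t : ℝ} (ht : a ≤ t) :
    ⟪P (w t), w t⟫ ≤ ⟪P (w a), w a⟫ * Real.exp (k * (t - a)) := by
  refine le_mul_exp_of_hasDerivWithinAt_le (f := P.reApplyInnerSelf ∘ w) (fun s hs ↦ ?_) hle ht
  simpa using (hP.hasStrictFDerivAt_reApplyInnerSelf (w s)).hasFDerivAt.comp_hasDerivWithinAt s
    (hw s hs)

lemma inner_symm_self_le_mul_exp {e : E ≃L[ℝ] E} (he : (e : E →ₗ[ℝ] E).IsSymmetric)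
    {γ lam a : ℝ} (hlam : 0 ≤ lam) (hγ : ∀ x, γ * ⟪e.symm x, x⟫ ≤ ‖x‖ ^ 2) {w u : ℝ → E}
    (hw : ∀ t, a ≤ t → HasDerivWithinAt w (-e (u t)) (Ici a) t)
    (hu : ∀ t, a ≤ t → lam * ‖w t‖ ^ 2 ≤ ⟪u t, w t⟫) {t : ℝ} (ht : a ≤ t) :
    ⟪e.symm (w t), w t⟫ ≤
      ⟪e.symm (w a), w a⟫ * Real.exp (-(2 * (lam * γ)) * (t - a)) := by
  have symm_isSymmetric : ((e.symm : E →L[ℝ] E) : E →ₗ[ℝ] E).IsSymmetric :=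
    LinearMap.IsSymmetric.toLinearMap_symm (T := e.toLinearEquiv) he
  refine inner_map_self_le_mul_exp symm_isSymmetric hw (fun s hs ↦ ?_) ht
  have cancel : ⟪e.symm (w s), e (u s)⟫ = ⟪u s, w s⟫ := by
    simpa [real_inner_comm] using (he (e.symm (w s)) (u s)).symm
  calc 2 * ⟪e.symm (w s), -e (u s)⟫
      = -(2 * ⟪u s, w s⟫) := by rw [inner_neg_right, cancel, mul_neg]
    _ ≤ -(2 * (lam * ‖w s‖ ^ 2)) := by gcongr; exact hu s hs
    _ ≤ -(2 * (lam * (γ * ⟪e.symm (w s), w s⟫))) := by gcongr; exact hγ (w s)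
    _ = -(2 * (lam * γ)) * ⟪e.symm (w s), w s⟫ := by ring

theorem stmt12_general [CompleteSpace E] {Γ : E →ₗ[ℝ] E} (hΓ : Γ.IsSymmetric) {γ₁ γ₂ lam : ℝ}
    (hγ₁pos : 0 < γ₁) (hγ₁ : ∀ x, γ₁ * ‖x‖ ^ 2 ≤ ⟪Γ x, x⟫) (hγ₂ : ∀ x, ⟪Γ x, x⟫ ≤ γ₂ * ‖x‖ ^ 2)
    (hlam : 0 ≤ lam) {A : ℝ → E → E} (hA : ∀ t, 0 ≤ t → ∀ x, lam * ‖x‖ ^ 2 ≤ ⟪A t x, x⟫) {W : ℝ → E}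
    (hW : ∀ t, 0 ≤ t → HasDerivWithinAt W (-Γ (A t (W t))) (Ici 0) t) (t : ℝ) (ht : 0 ≤ t) :
    ‖W t‖ ≤ √(γ₂ / γ₁) * ‖W 0‖ * Real.exp (-(lam * γ₁) * t) := by
  obtain hWt | hWt := eq_or_ne (W t) 0
  · rw [hWt, norm_zero]
    positivity
  have hγ₂pos : 0 < γ₂ := by
    have hnorm : 0 < ‖W t‖ ^ 2 := by positivity
    exact hγ₁pos.trans_le (le_of_mul_le_mul_right ((hγ₁ _).trans (hγ₂ _)) hnorm)
  have hΓpos : Γ.IsPositive := ⟨hΓ, fun x ↦ (by positivity : 0 ≤ γ₁ * ‖x‖ ^ 2).trans (hγ₁ x)⟩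
  obtain ⟨e, rfl⟩ := exists_continuousLinearEquiv_of_coercive hΓ hγ₁pos hγ₁
  have upper (x : E) : γ₁ * ⟪e.symm x, x⟫ ≤ ‖x‖ ^ 2 := by
    simpa [real_inner_comm] using
      mul_inner_le_norm_sq_of_mul_norm_sq_le_inner hγ₁pos.le (hγ₁ (e.symm x))
  have lower (x : E) : ‖x‖ ^ 2 ≤ γ₂ * ⟪e.symm x, x⟫ := by
    simpa [real_inner_comm] using norm_map_sq_le_mul_inner hΓpos hγ₂ (e.symm x)
  have decay := inner_symm_self_le_mul_exp hΓ hlam upper hW (fun s hs ↦ hA s hs (W s)) ht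
  rw [sub_zero] at decay
  have sq_bound : ‖W t‖ ^ 2 ≤ γ₂ / γ₁ * (‖W 0‖ * Real.exp (-(lam * γ₁) * t)) ^ 2 :=
    calc ‖W t‖ ^ 2
        ≤ γ₂ * ⟪e.symm (W t), W t⟫ := lower (W t)
      _ ≤ γ₂ * (⟪e.symm (W 0), W 0⟫ * Real.exp (-(2 * (lam * γ₁)) * t)) := by gcongr
      _ ≤ γ₂ * (‖W 0‖ ^ 2 / γ₁ * Real.exp (-(2 * (lam * γ₁)) * t)) := by
          gcongr
          exact (le_div_iff₀' hγ₁pos).2 (upper (W 0))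
      _ = γ₂ / γ₁ * (‖W 0‖ * Real.exp (-(lam * γ₁) * t)) ^ 2 := by
          rw [mul_pow, ← Real.exp_nat_mul]
          push_cast
          ring_nf
  calc ‖W t‖
      ≤ √(γ₂ / γ₁ * (‖W 0‖ * Real.exp (-(lam * γ₁) * t)) ^ 2) :=
        Real.le_sqrt_of_sq_le sq_bound
    _ = √(γ₂ / γ₁) * ‖W 0‖ * Real.exp (-(lam * γ₁) * t) := by
        rw [Real.sqrt_mul' _ (sq_nonneg _), Real.sqrt_sq (by positivity), mul_assoc]

end InnerProductSpace

section Matrix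

open Set Matrix
open scoped RealInnerProductSpace MatrixOrder

variable {n : Type*} [Fintype n] [DecidableEq n] {A : Matrix n n ℝ}

lemma mul_norm_sq_le_inner_toEuclideanLin (hA : A.IsHermitian) {c : ℝ}
    (hc : c ∈ lowerBounds (range hA.eigenvalues)) (x : EuclideanSpace ℝ n) :
    c * ‖x‖ ^ 2 ≤ ⟪toEuclideanLin A x, x⟫ := by
  have hle : algebraMap ℝ _ c ≤ A := by
    rwa [algebraMap_le_iff_le_spectrum hA.isSelfAdjoint, hA.spectrum_real_eq_range_eigenvalues]
  simpa [Algebra.algebraMap_eq_smul_one, inner_sub_left, inner_smul_left] using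
    (isPositive_toEuclideanLin_iff.2 hle).inner_nonneg_left x

lemma inner_toEuclideanLin_le_mul_norm_sq (hA : A.IsHermitian) {c : ℝ}
    (hc : c ∈ upperBounds (range hA.eigenvalues)) (x : EuclideanSpace ℝ n) :
    ⟪toEuclideanLin A x, x⟫ ≤ c * ‖x‖ ^ 2 := by
  have hle : A ≤ algebraMap ℝ _ c := by
    rwa [le_algebraMap_iff_spectrum_le hA.isSelfAdjoint, hA.spectrum_real_eq_range_eigenvalues]
  simpa [Algebra.algebraMap_eq_smul_one, inner_sub_left, inner_smul_left] using
    (isPositive_toEuclideanLin_iff.2 hle).inner_nonneg_left x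

lemma mul_norm_sq_le_inner_toEuclideanLin_add {B : Matrix n n ℝ} (hB : B.PosSemidef)
    (hA : A.IsHermitian) {c : ℝ} (hc : c ∈ lowerBounds (range hA.eigenvalues))
    (x : EuclideanSpace ℝ n) : c * ‖x‖ ^ 2 ≤ ⟪toEuclideanLin (B + A) x, x⟫ := by
  rw [map_add, LinearMap.add_apply, inner_add_left]
  exact le_add_of_nonneg_of_le ((isPositive_toEuclideanLin_iff.2 hB).inner_nonneg_left x)
    (mul_norm_sq_le_inner_toEuclideanLin hA hc x)

end Matrix

/-- Idealized (exact-state-data) form of the concurrent-learning parameter error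
dynamics in the proof of Theorem 1: if `Γ` is symmetric positive definite with
eigenvalues in `[γ₁, γ₂]` (`γ₁` smallest, `γ₂` largest), `Ψ = Σⱼ vⱼvⱼᵀ` has
`λ_min(Ψ) = λ > 0`, and `W̃' = −Γ(v(t)v(t)ᵀ + Ψ)W̃`, then
`‖W̃(t)‖ ≤ √(γ₂/γ₁) ‖W̃(0)‖ e^{−λγ₁t}`; in particular `W̃ → 0` exponentially. -/
theorem stmt12 (m p : ℕ) (Γ : Matrix (Fin m) (Fin m) ℝ)
    (hΓherm : Γ.IsHermitian) (hΓpd : Γ.PosDef)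
    (γ₁ γ₂ : ℝ)
    (hγ₁ : IsLeast {r : ℝ | ∃ i, hΓherm.eigenvalues i = r} γ₁)
    (hγ₂ : IsGreatest {r : ℝ | ∃ i, hΓherm.eigenvalues i = r} γ₂)
    (hγ₁pos : 0 < γ₁)
    (v : ℝ → (Fin m → ℝ)) (hv : Continuous v)
    (vj : Fin p → (Fin m → ℝ))
    (Ψ : Matrix (Fin m) (Fin m) ℝ)
    (hΨ : Ψ = ∑ j : Fin p, Matrix.vecMulVec (vj j) (vj j))
    (hΨherm : Ψ.IsHermitian)
    (lam : ℝ) (hlam : IsLeast {r : ℝ | ∃ i, hΨherm.eigenvalues i = r} lam)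
    (hlampos : 0 < lam)
    (W : ℝ → EuclideanSpace ℝ (Fin m))
    (hW : ∀ t : ℝ, 0 ≤ t → HasDerivWithinAt W
      (-(Matrix.toEuclideanLin (Γ * (Matrix.vecMulVec (v t) (v t) + Ψ)) (W t)))
      (Set.Ici (0 : ℝ)) t) :
    ∀ t : ℝ, 0 ≤ t →
      ‖W t‖ ≤ Real.sqrt (γ₂ / γ₁) * ‖W 0‖ * Real.exp (-(lam * γ₁) * t) :=
  stmt12_general (Matrix.isSymmetric_toEuclideanLin_iff.2 hΓherm) hγ₁pos
    (mul_norm_sq_le_inner_toEuclideanLin hΓherm hγ₁.2)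
    (inner_toEuclideanLin_le_mul_norm_sq hΓherm hγ₂.2) hlampos.le
    (fun t _ ↦ mul_norm_sq_le_inner_toEuclideanLin_add
      (Matrix.posSemidef_vecMulVec_self_star (v t)) hΨherm hlam.2)
    (by simpa using hW)
end
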